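/- Let $k_1,k_2,k_3$ be real constants, $\mu>0$, and suppose $1+(k_1+k_3)\theta+k_2\theta^2>0$ for all $\theta$ in a neighborhood of $0$ in $[0,\infty)$. Let $\phi$ be a $C^\infty$ function on a neighborhood of $0$ with $\phi(0)=1$ satisfying $(1+(k_1+k_3)s^2+k_2s^4)\phi''(s)=(k_1+k_2s^2)(\phi(s)-s\phi'(s))$, and set $\sigma(x):=\tfrac{1}{2}\int_0^{x}\frac{k_2\theta+k_3}{1+(k_1+k_3)\theta+k_2\theta^2}\,d\theta$. For small $\delta\ge0$ define $L_1(\delta):=\int_0^{2\pi/\sqrt{\mu}}\frac{\phi\big(-2\mu^{-1}\delta\sin(\sqrt{\mu}\,t)\big)}{\sqrt{1+(k_1+k_3)B+k_2B^2}\;e^{\sigma(B)}}\,dt$, where $B=B(t,\delta):=4\mu^{-2}\delta^2\sin^2(\sqrt{\mu}\,t)$. Then as $\delta\to0^+$, $L_1(\delta)=\frac{2\pi}{\sqrt{\mu}}-\frac{4k_3\pi}{\mu^2\sqrt{\mu}}\,\delta^2+\frac{4(3k_3^2+2k_1k_3-2k_2)\pi}{\mu^4\sqrt{\mu}}\,\delta^4+O(\delta^6)$.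 -/

import Mathlib

open Set Topology Asymptotics

/-- The function `σ(x) = (1/2)∫₀ˣ (k₂θ+k₃)/(1+(k₁+k₃)θ+k₂θ²) dθ`. -/
noncomputable def sigmaFn (k₁ k₂ k₃ x : ℝ) : ℝ :=
  (1 / 2) * ∫ θ in (0:ℝ)..x, (k₂ * θ + k₃) / (1 + (k₁ + k₃) * θ + k₂ * θ ^ 2)

/-- `B(t,δ) = 4μ⁻²δ²sin²(√μ t)`. -/
noncomputable def Bfn (μ δ t : ℝ) : ℝ :=
  4 * δ ^ 2 / μ ^ 2 * Real.sin (Real.sqrt μ * t) ^ 2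

/-- The integral `L₁(δ)` from equation (30) of the paper. -/
noncomputable def Lone (k₁ k₂ k₃ μ : ℝ) (φ : ℝ → ℝ) (δ : ℝ) : ℝ :=
  ∫ t in (0:ℝ)..(2 * Real.pi / Real.sqrt μ),
    φ (-2 * μ⁻¹ * δ * Real.sin (Real.sqrt μ * t)) /
      (Real.sqrt (1 + (k₁ + k₃) * Bfn μ δ t + k₂ * Bfn μ δ t ^ 2) *
        Real.exp (sigmaFn k₁ k₂ k₃ (Bfn μ δ t)))

/-! The substitution `u = √μ t` turns `L₁(δ)` into the mean of `f (x sin u)` over a period, where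
`x = -2δ/μ` and `f = φ w`, with `w` the reciprocal of the denominator. Only the even Taylor
coefficients of `f` survive the averaging, the one of order `2k` being multiplied by the mean
`(2k choose k) / 4^k` of `sin ^ (2k)`. The function `φ` and the weight `w` solve linear differential
equations with polynomial coefficients, which become recursions on their Taylor series at `0`. The
coefficient `φ'(0)`, which the equation leaves free, contributes only to odd orders since `w` is
even. -/

open Filter intervalIntegral PowerSeries
open scoped ContDiff

section TaylorSeries

open scoped Nat

variable {𝕜 : Type*} [NontriviallyNormedField 𝕜]

/-- `f` is smooth at `x` and its formal Taylor expansion there, in the increment from `x`, is the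
power series `F`. Neither convergence of `F` nor analyticity of `f` is asserted. The condition on
the derivatives is kept free of division, so that it makes sense in every characteristic. -/
structure HasTaylorSeriesAt (f : 𝕜 → 𝕜) (F : 𝕜⟦X⟧) (x : 𝕜) : Prop where
  contDiffAt : ContDiffAt 𝕜 ∞ f x
  iteratedDeriv_eq : ∀ n : ℕ, iteratedDeriv n f x = n ! * coeff n F

lemma exists_hasTaylorSeriesAt [CharZero 𝕜] {f : 𝕜 → 𝕜} {x : 𝕜} (hf : ContDiffAt 𝕜 ∞ f x) :
    ∃ F, HasTaylorSeriesAt f F x :=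
  ⟨PowerSeries.mk fun n => iteratedDeriv n f x / n !, hf, fun n => by
    rw [coeff_mk, mul_div_cancel₀ _ (mod_cast n.factorial_ne_zero)]⟩

lemma hasTaylorSeriesAt_const (c x : 𝕜) : HasTaylorSeriesAt (fun _ => c) (C c) x where
  contDiffAt := contDiffAt_const
  iteratedDeriv_eq n := by cases n <;> simp [iteratedDeriv_const, coeff_C]

lemma hasTaylorSeriesAt_id (x : 𝕜) : HasTaylorSeriesAt id (C x + X) x where
  contDiffAt := contDiffAt_id
  iteratedDeriv_eq n := by rcases n with _ | _ | n <;> simp [iteratedDeriv_id, coeff_X]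

lemma hasTaylorSeriesAt_id_zero : HasTaylorSeriesAt id (X : 𝕜⟦X⟧) 0 := by
  simpa using hasTaylorSeriesAt_id (0 : 𝕜)

namespace HasTaylorSeriesAt

variable {f g : 𝕜 → 𝕜} {F G : 𝕜⟦X⟧} {x : 𝕜}

lemma coeff_zero (hf : HasTaylorSeriesAt f F x) : coeff 0 F = f x := by
  simpa using (hf.iteratedDeriv_eq 0).symm

lemma unique [CharZero 𝕜] (hf : HasTaylorSeriesAt f F x) (hg : HasTaylorSeriesAt g G x)
    (hfg : f =ᶠ[𝓝 x] g) : F = G := by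
  ext n
  have hn : (n ! : 𝕜) ≠ 0 := mod_cast n.factorial_ne_zero
  exact mul_left_cancel₀ hn <| by
    rw [← hf.iteratedDeriv_eq, ← hg.iteratedDeriv_eq, hfg.iteratedDeriv_eq]

lemma add (hf : HasTaylorSeriesAt f F x) (hg : HasTaylorSeriesAt g G x) :
    HasTaylorSeriesAt (f + g) (F + G) x where
  contDiffAt := hf.contDiffAt.add hg.contDiffAt
  iteratedDeriv_eq n := by
    rw [iteratedDeriv_add (contDiffAt_infty.1 hf.contDiffAt n) (contDiffAt_infty.1 hg.contDiffAt n),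
      hf.iteratedDeriv_eq, hg.iteratedDeriv_eq, map_add, mul_add]

lemma sub (hf : HasTaylorSeriesAt f F x) (hg : HasTaylorSeriesAt g G x) :
    HasTaylorSeriesAt (f - g) (F - G) x where
  contDiffAt := hf.contDiffAt.sub hg.contDiffAt
  iteratedDeriv_eq n := by
    rw [iteratedDeriv_sub (contDiffAt_infty.1 hf.contDiffAt n) (contDiffAt_infty.1 hg.contDiffAt n),
      hf.iteratedDeriv_eq, hg.iteratedDeriv_eq, map_sub, mul_sub]

lemma mul (hf : HasTaylorSeriesAt f F x) (hg : HasTaylorSeriesAt g G x) :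
    HasTaylorSeriesAt (f * g) (F * G) x where
  contDiffAt := hf.contDiffAt.mul hg.contDiffAt
  iteratedDeriv_eq n := by
    rw [iteratedDeriv_mul (contDiffAt_infty.1 hf.contDiffAt n) (contDiffAt_infty.1 hg.contDiffAt n),
      coeff_mul, Finset.Nat.sum_antidiagonal_eq_sum_range_succ fun i j => coeff i F * coeff j G,
      Finset.mul_sum]
    refine Finset.sum_congr rfl fun i hi => ?_
    have hchoose : (n.choose i : 𝕜) * i ! * (n - i)! = n ! := mod_cast congr_arg (Nat.cast (R := 𝕜))
      (Nat.choose_mul_factorial_mul_factorial (Finset.mem_range_succ_iff.1 hi))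
    rw [hf.iteratedDeriv_eq, hg.iteratedDeriv_eq, ← hchoose]
    ring

lemma pow (hf : HasTaylorSeriesAt f F x) (n : ℕ) : HasTaylorSeriesAt (f ^ n) (F ^ n) x := by
  induction n with
  | zero => simpa only [pow_zero, map_one] using! hasTaylorSeriesAt_const 1 x
  | succ n ih => simpa only [pow_succ] using ih.mul hf

lemma deriv (hf : HasTaylorSeriesAt f F x) : HasTaylorSeriesAt (deriv f) (d⁄dX 𝕜 F) x where
  contDiffAt := hf.contDiffAt.derivWithin le_rfl
  iteratedDeriv_eq n := by
    rw [← iteratedDeriv_succ', hf.iteratedDeriv_eq, coeff_derivative, Nat.factorial_succ]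
    push_cast
    ring

end HasTaylorSeriesAt

lemma HasTaylorSeriesAt.sub_sum_isBigO {f : ℝ → ℝ} {F : ℝ⟦X⟧} {x₀ : ℝ}
    (hf : HasTaylorSeriesAt f F x₀) (n : ℕ) :
    (fun x => f x - ∑ i ∈ Finset.range n, coeff i F * (x - x₀) ^ i)
      =O[𝓝 x₀] fun x => (x - x₀) ^ n := by
  obtain ⟨r, hr, hfr⟩ : ∃ r > 0, ContDiffOn ℝ n f (Metric.ball x₀ r) := by
    obtain ⟨u, hu, hfu⟩ := (contDiffAt_infty.1 hf.contDiffAt n).contDiffOn le_rfl (by simp)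
    obtain ⟨r, hr, hru⟩ := Metric.mem_nhds_iff.1 (by simpa using hu)
    exact ⟨r, hr, hfu.mono hru⟩
  have hx₀ : x₀ ∈ Metric.ball x₀ r := Metric.mem_ball_self hr
  have htaylor : ∀ x, taylorWithinEval f n (Metric.ball x₀ r) x₀ x
      = ∑ i ∈ Finset.range (n + 1), coeff i F * (x - x₀) ^ i := fun x => by
    rw [taylor_within_apply]
    refine Finset.sum_congr rfl fun i _ => ?_
    rw [iteratedDerivWithin_of_isOpen Metric.isOpen_ball hx₀, hf.iteratedDeriv_eq, smul_eq_mul]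
    field_simp
  have hlittle := taylor_isLittleO (convex_ball x₀ r) hx₀ hfr
  rw [nhdsWithin_eq_nhds.2 (Metric.ball_mem_nhds x₀ hr)] at hlittle
  have hlast : (fun x => coeff n F * (x - x₀) ^ n) =O[𝓝 x₀] fun x => (x - x₀) ^ n :=
    (isBigO_refl _ _).const_mul_left _
  refine (hlittle.isBigO.add hlast).congr_left fun x => ?_
  rw [htaylor, Finset.sum_range_succ]
  ring

end TaylorSeries

section SineMeans

lemma integral_sin_pow_odd_two_pi (n : ℕ) :
    ∫ u in (0 : ℝ)..2 * Real.pi, Real.sin u ^ (2 * n + 1) = 0 := by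
  induction n with
  | zero => simp
  | succ n ih => rw [show 2 * (n + 1) + 1 = 2 * n + 1 + 2 by ring, integral_sin_pow, ih]; simp

lemma integral_sin_pow_even_two_pi (n : ℕ) :
    ∫ u in (0 : ℝ)..2 * Real.pi, Real.sin u ^ (2 * n)
      = 2 * Real.pi * (n.centralBinom / 4 ^ n) := by
  induction n with
  | zero => simp
  | succ n ih =>
    have hrec : ((n + 1).centralBinom : ℝ) = 2 * (2 * n + 1) * n.centralBinom / (n + 1) := by
      rw [eq_div_iff (by positivity), mul_comm]
      exact_mod_cast n.succ_mul_centralBinom_succ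
    rw [mul_add_one, integral_sin_pow, ih, hrec, Real.sin_zero, Real.sin_two_pi]
    push_cast
    field_simp
    ring

lemma integral_sum_range_two_mul_sin_pow (a : ℕ → ℝ) (n : ℕ) :
    ∫ u in (0 : ℝ)..2 * Real.pi, ∑ i ∈ Finset.range (2 * n), a i * Real.sin u ^ i
      = 2 * Real.pi * ∑ k ∈ Finset.range n, k.centralBinom / 4 ^ k * a (2 * k) := by
  rw [integral_finsetSum fun i _ => Continuous.intervalIntegrable (by fun_prop) _ _]
  simp only [intervalIntegral.integral_const_mul]
  induction n with
  | zero => simp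
  | succ n ih =>
    rw [mul_add_one, Finset.sum_range_succ, Finset.sum_range_succ, ih, Finset.sum_range_succ,
      integral_sin_pow_even_two_pi, integral_sin_pow_odd_two_pi]
    ring

lemma isBigO_integral_comp_mul {E : Type*} [NormedAddCommGroup E] [NormedSpace ℝ E] {R : ℝ → E}
    {g : ℝ → ℝ} {n : ℕ} (hR : R =O[𝓝 0] fun s => s ^ n) {M : ℝ} (hg : ∀ u, |g u| ≤ M) (a b : ℝ) :
    (fun x => ∫ u in a..b, R (x * g u)) =O[𝓝 0] fun x : ℝ => x ^ n := by
  obtain ⟨c, hc, hbound⟩ := hR.exists_pos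
  obtain ⟨r, hr, hbound⟩ := Metric.eventually_nhds_iff.1 hbound.bound
  have hle : ∀ x u, |x * g u| ≤ |x| * M := fun x u => by
    rw [abs_mul]
    gcongr
    exact hg u
  have hsmall : ∀ᶠ x : ℝ in 𝓝 0, |x| * M < r :=
    (show ContinuousAt (fun x : ℝ => |x| * M) 0 by fun_prop).eventually_lt_const (by simpa using hr)
  refine IsBigO.of_bound (c * M ^ n * |b - a|) ?_
  filter_upwards [hsmall] with x hx
  calc ‖∫ u in a..b, R (x * g u)‖ ≤ c * (|x| * M) ^ n * |b - a| := by
        refine norm_integral_le_of_norm_le_const fun u _ => ?_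
        refine (hbound (by simpa using (hle x u).trans_lt hx)).trans ?_
        rw [norm_pow, Real.norm_eq_abs]
        gcongr
        exact hle x u
    _ = c * M ^ n * |b - a| * ‖x ^ n‖ := by
        rw [norm_pow, Real.norm_eq_abs]
        ring

lemma eventually_continuousAt_of_contDiffAt {𝕜 E F : Type*} [NontriviallyNormedField 𝕜]
    [NormedAddCommGroup E] [NormedSpace 𝕜 E] [NormedAddCommGroup F] [NormedSpace 𝕜 F] {f : E → F}
    {x : E} {n : WithTop ℕ∞} (hf : ContDiffAt 𝕜 n f x) : ∀ᶠ y in 𝓝 x, ContinuousAt f y := by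
  filter_upwards [(hf.of_le (zero_le : 0 ≤ n)).eventually (by simp)] with y hy
    using hy.continuousAt

lemma eventually_continuous_comp_mul {E : Type*} [TopologicalSpace E] {f : ℝ → E} {g : ℝ → ℝ}
    (hf : ∀ᶠ s in 𝓝 0, ContinuousAt f s) (hg : Continuous g) {M : ℝ} (hM : ∀ u, |g u| ≤ M) :
    ∀ᶠ x in 𝓝 0, Continuous fun u => f (x * g u) := by
  obtain ⟨r, hr, hfr⟩ := Metric.eventually_nhds_iff.1 hf
  have hsmall : ∀ᶠ x : ℝ in 𝓝 0, |x| * M < r :=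
    (show ContinuousAt (fun x : ℝ => |x| * M) 0 by fun_prop).eventually_lt_const (by simpa using hr)
  filter_upwards [hsmall] with x hx
  refine continuous_iff_continuousAt.2 fun u => ContinuousAt.comp (hfr ?_) (by fun_prop)
  rw [Real.dist_eq, sub_zero, abs_mul]
  exact (mul_le_mul_of_nonneg_left (hM u) (abs_nonneg x)).trans_lt hx

lemma HasTaylorSeriesAt.integral_comp_mul_sin_isBigO {f : ℝ → ℝ} {F : ℝ⟦X⟧}
    (hf : HasTaylorSeriesAt f F 0) (n : ℕ) :
    (fun x => (∫ u in (0 : ℝ)..2 * Real.pi, f (x * Real.sin u))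
      - 2 * Real.pi *
          ∑ k ∈ Finset.range n, k.centralBinom / 4 ^ k * (coeff (2 * k) F * x ^ (2 * k)))
      =O[𝓝 0] fun x => x ^ (2 * n) := by
  have hremainder := hf.sub_sum_isBigO (2 * n)
  simp only [sub_zero] at hremainder
  refine (isBigO_integral_comp_mul hremainder Real.abs_sin_le_one 0 (2 * Real.pi)).congr' ?_
    EventuallyEq.rfl
  filter_upwards [eventually_continuous_comp_mul
    (eventually_continuousAt_of_contDiffAt hf.contDiffAt) Real.continuous_sin Real.abs_sin_le_one]
    with x hx
  rw [intervalIntegral.integral_sub (hx.intervalIntegrable _ _)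
    (Continuous.intervalIntegrable (by fun_prop) _ _)]
  simp only [mul_pow, ← mul_assoc]
  rw [integral_sum_range_two_mul_sin_pow fun i => coeff i F * x ^ i]
  simp only [mul_assoc]

end SineMeans

section Primitives

variable {E : Type*} [NormedAddCommGroup E] [NormedSpace ℝ E] [CompleteSpace E] {f : ℝ → E} {a : ℝ}

lemma eventually_hasDerivAt_integral (hf : ∀ᶠ x in 𝓝 a, ContinuousAt f x) :
    ∀ᶠ x in 𝓝 a, HasDerivAt (fun y => ∫ t in a..y, f t) (f x) x := by
  obtain ⟨r, hr, hfr⟩ := Metric.eventually_nhds_iff_ball.1 hf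
  have hcont : ContinuousOn f (Metric.ball a r) := fun x hx => (hfr x hx).continuousWithinAt
  filter_upwards [Metric.ball_mem_nhds a hr] with x hx
  refine integral_hasDerivAt_right (hcont.mono ?_).intervalIntegrable
    (hcont.stronglyMeasurableAtFilter Metric.isOpen_ball x hx) (hfr x hx)
  rw [Real.ball_eq_Ioo] at hx ⊢
  exact ordConnected_Ioo.uIcc_subset (by simpa using hr) hx

lemma contDiffAt_succ_integral {n : ℕ} (hf : ContDiffAt ℝ n f a) :
    ContDiffAt ℝ (n + 1) (fun y => ∫ t in a..y, f t) a := by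
  refine contDiffAt_succ_iff_hasFDerivAt.2
    ⟨fun x => ContinuousLinearMap.toSpanSingleton ℝ (f x), ?_, ?_⟩
  · obtain ⟨u, hu, hderiv⟩ := (eventually_hasDerivAt_integral
      (eventually_continuousAt_of_contDiffAt hf)).exists_mem
    exact ⟨u, hu, fun x hx => (hderiv x hx).hasFDerivAt⟩
  · exact (ContinuousLinearMap.toSpanSingletonCLE (𝕜 := ℝ) (E := E)).contDiff.contDiffAt.comp a hf

end Primitives

section FormalEquations

variable {K : Type*} [Field K] [CharZero K] {k₁ k₂ k₃ : K} {Φ W : K⟦X⟧}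

lemma coeff_of_profile_equation
    (hΦ : (1 + C (k₁ + k₃) * X ^ 2 + C k₂ * X ^ 4) * d⁄dX K (d⁄dX K Φ)
      = (C k₁ + C k₂ * X ^ 2) * (Φ - X * d⁄dX K Φ)) :
    coeff 2 Φ = k₁ / 2 * coeff 0 Φ ∧
      coeff 4 Φ = (2 * k₂ - 3 * k₁ ^ 2 - 2 * k₁ * k₃) / 24 * coeff 0 Φ := by
  have h₂ : coeff 2 Φ * 2 = k₁ * coeff 0 Φ := by
    have h := congr_arg (coeff 0) hΦ
    simp only [map_add, add_mul, one_mul, mul_assoc, coeff_derivative, zero_add, Nat.reduceAdd,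
      Nat.cast_one, CharP.cast_eq_zero, mul_one, coeff_C_mul, coeff_X_pow_mul', nonpos_iff_eq_zero,
      OfNat.ofNat_ne_zero, ↓reduceIte, mul_zero, add_zero, map_sub, coeff_zero_X_mul, sub_zero] at h
    linear_combination h
  have h₄ : coeff 4 Φ * 12 + 2 * (k₁ + k₃) * coeff 2 Φ = -k₁ * coeff 2 Φ + k₂ * coeff 0 Φ := by
    have h := congr_arg (coeff 2) hΦ
    simp only [map_add, add_mul, one_mul, mul_assoc, coeff_derivative, Nat.reduceAdd,
      Nat.cast_ofNat, coeff_C_mul, coeff_X_pow_mul', Std.le_refl, ↓reduceIte, tsub_self, zero_add,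
      Nat.cast_one, CharP.cast_eq_zero, mul_one, Nat.reduceLeDiff, mul_zero, add_zero, map_sub,
      coeff_succ_X_mul, coeff_zero_X_mul, sub_zero] at h
    linear_combination h
  have hΦ₂ : coeff 2 Φ = k₁ / 2 * coeff 0 Φ := by linear_combination h₂ / 2
  refine ⟨hΦ₂, ?_⟩
  rw [hΦ₂] at h₄
  linear_combination h₄ / 12

lemma coeff_of_weight_equation
    (hW : (1 + C (k₁ + k₃) * X ^ 2 + C k₂ * X ^ 4) * d⁄dX K W
      = -(X * (C (k₁ + 2 * k₃) + C (3 * k₂) * X ^ 2)) * W) :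
    coeff 1 W = 0 ∧ coeff 2 W = -(k₁ + 2 * k₃) / 2 * coeff 0 W ∧ coeff 3 W = 0 ∧
      coeff 4 W = ((3 * k₁ + 4 * k₃) * (k₁ + 2 * k₃) - 6 * k₂) / 8 * coeff 0 W := by
  have hcoeff := fun n => congr_arg (coeff n) hW
  have h₁ := hcoeff 0
  have h₂ := hcoeff 1
  have h₃ := hcoeff 2
  have h₄ := hcoeff 3
  simp only [map_add, add_mul, one_mul, mul_assoc, coeff_derivative, zero_add, CharP.cast_eq_zero,
    mul_one, coeff_C_mul, coeff_X_pow_mul', nonpos_iff_eq_zero, OfNat.ofNat_ne_zero, ↓reduceIte,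
    mul_zero, add_zero, map_mul, neg_mul, map_neg, coeff_zero_X_mul, neg_zero, Nat.reduceAdd,
    Nat.cast_one, Nat.not_ofNat_le_one, coeff_succ_X_mul, neg_add_rev, Nat.cast_ofNat, Std.le_refl,
    tsub_self, Nat.reduceLeDiff, Nat.reduceSub] at h₁ h₂ h₃ h₄
  have hrec₂ : 2 * coeff 2 W = -(k₁ + 2 * k₃) * coeff 0 W := by linear_combination h₂
  have hrec₃ : 3 * coeff 3 W + (k₁ + k₃) * coeff 1 W = -(k₁ + 2 * k₃) * coeff 1 W := by
    linear_combination h₃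
  have hrec₄ : 4 * coeff 4 W + 2 * (k₁ + k₃) * coeff 2 W
      = -(k₁ + 2 * k₃) * coeff 2 W - 3 * k₂ * coeff 0 W := by
    linear_combination h₄
  have hW₁ : coeff 1 W = 0 := by linear_combination h₁
  have hW₂ : coeff 2 W = -(k₁ + 2 * k₃) / 2 * coeff 0 W := by linear_combination hrec₂ / 2
  rw [hW₁] at hrec₃
  rw [hW₂] at hrec₄
  exact ⟨hW₁, hW₂, by linear_combination hrec₃ / 3, by linear_combination hrec₄ / 4⟩

end FormalEquations

lemma hasDerivAt_inv_sqrt_mul_exp {p q : ℝ → ℝ} {p' q' x : ℝ} (hp : HasDerivAt p p' x)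
    (hq : HasDerivAt q q' x) (hpos : 0 < p x) :
    HasDerivAt (fun y => (√(p y) * Real.exp (q y))⁻¹)
      (-(p' / (2 * p x) + q') * (√(p x) * Real.exp (q x))⁻¹) x := by
  have hsqrt : 0 < √(p x) := Real.sqrt_pos.2 hpos
  have h := ((hp.sqrt hpos.ne').mul hq.exp).inv (mul_pos hsqrt (Real.exp_pos _)).ne'
  refine h.congr_deriv ?_
  have hhalf : p' / (2 * p x) = p' / (2 * √(p x) ^ 2) := by rw [Real.sq_sqrt hpos.le]
  rw [hhalf, Pi.mul_apply]
  field_simp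

section LengthIntegrand

variable (k₁ k₂ k₃ : ℝ)

/-- The reciprocal of the denominator in the integrand of `Lone`, as a function of the argument `s`
of `φ`, in terms of which `Bfn` is `s ^ 2`. -/
noncomputable def lengthWeight (s : ℝ) : ℝ :=
  (√(1 + (k₁ + k₃) * s ^ 2 + k₂ * s ^ 4) * Real.exp (sigmaFn k₁ k₂ k₃ (s ^ 2)))⁻¹

lemma lengthWeight_zero : lengthWeight k₁ k₂ k₃ 0 = 1 := by
  simp [lengthWeight, sigmaFn]

lemma contDiffAt_sigmaFn : ContDiffAt ℝ ∞ (sigmaFn k₁ k₂ k₃) 0 := by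
  have hintegrand : ContDiffAt ℝ ∞
      (fun θ : ℝ => (k₂ * θ + k₃) / (1 + (k₁ + k₃) * θ + k₂ * θ ^ 2)) 0 :=
    ContDiffAt.div (by fun_prop) (by fun_prop) (by simp)
  refine contDiffAt_const.mul <| contDiffAt_infty.2 fun n => ?_
  exact (contDiffAt_succ_integral (contDiffAt_infty.1 hintegrand n)).of_le
    (mod_cast n.le_succ)

lemma contDiffAt_lengthWeight : ContDiffAt ℝ ∞ (lengthWeight k₁ k₂ k₃) 0 := by
  have hσ : ContDiffAt ℝ ∞ (fun s => sigmaFn k₁ k₂ k₃ (s ^ 2)) 0 :=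
    ContDiffAt.comp (g := sigmaFn k₁ k₂ k₃) 0 (by simpa using contDiffAt_sigmaFn k₁ k₂ k₃)
      (by fun_prop)
  exact ((ContDiffAt.sqrt (by fun_prop) (by simp)).mul hσ.exp).inv (by simp [Real.exp_ne_zero])

lemma eventually_hasDerivAt_sigmaFn : ∀ᶠ x in 𝓝 0, HasDerivAt (sigmaFn k₁ k₂ k₃)
    (1 / 2 * ((k₂ * x + k₃) / (1 + (k₁ + k₃) * x + k₂ * x ^ 2))) x := by
  have hne : ∀ᶠ x : ℝ in 𝓝 0, 1 + (k₁ + k₃) * x + k₂ * x ^ 2 ≠ 0 :=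
    ContinuousAt.eventually_ne (by fun_prop) (by simp)
  have hcont : ∀ᶠ x : ℝ in 𝓝 0,
      ContinuousAt (fun θ : ℝ => (k₂ * θ + k₃) / (1 + (k₁ + k₃) * θ + k₂ * θ ^ 2)) x :=
    hne.mono fun x hx => ContinuousAt.div (by fun_prop) (by fun_prop) hx
  exact (eventually_hasDerivAt_integral hcont).mono fun x hx => hx.const_mul _

lemma eventually_deriv_lengthWeight : ∀ᶠ s in 𝓝 0,
    (1 + (k₁ + k₃) * s ^ 2 + k₂ * s ^ 4) * deriv (lengthWeight k₁ k₂ k₃) s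
      = -(s * (k₁ + 2 * k₃ + 3 * k₂ * s ^ 2)) * lengthWeight k₁ k₂ k₃ s := by
  have hsq : Tendsto (fun s : ℝ => s ^ 2) (𝓝 0) (𝓝 0) := by
    simpa using (continuous_pow 2).tendsto (0 : ℝ)
  have hpos : ∀ᶠ s : ℝ in 𝓝 0, 0 < 1 + (k₁ + k₃) * s ^ 2 + k₂ * s ^ 4 :=
    (show ContinuousAt (fun s : ℝ => 1 + (k₁ + k₃) * s ^ 2 + k₂ * s ^ 4) 0
      by fun_prop).eventually_const_lt (by simp)
  filter_upwards [hsq.eventually (eventually_hasDerivAt_sigmaFn k₁ k₂ k₃), hpos] with s hσ hs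
  simp only [← pow_mul, Nat.reduceMul] at hσ
  have hp : HasDerivAt (fun s : ℝ => 1 + (k₁ + k₃) * s ^ 2 + k₂ * s ^ 4)
      ((k₁ + k₃) * (2 * s) + k₂ * (4 * s ^ 3)) s := by
    simpa using (((hasDerivAt_pow 2 s).const_mul (k₁ + k₃)).const_add 1).fun_add
      ((hasDerivAt_pow 4 s).const_mul k₂)
  have hS : HasDerivAt (fun s => sigmaFn k₁ k₂ k₃ (s ^ 2)) _ s :=
    HasDerivAt.comp (h₂ := sigmaFn k₁ k₂ k₃) s hσ (hasDerivAt_pow 2 s)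
  have hw := hasDerivAt_inv_sqrt_mul_exp hp hS hs
  have hderiv : deriv (lengthWeight k₁ k₂ k₃) s = _ * lengthWeight k₁ k₂ k₃ s := hw.deriv
  rw [hderiv, ← mul_assoc]
  congr 1
  generalize 1 + (k₁ + k₃) * s ^ 2 + k₂ * s ^ 4 = D at hs ⊢
  field_simp
  ring

lemma exists_hasTaylorSeriesAt_lengthWeight :
    ∃ W, HasTaylorSeriesAt (lengthWeight k₁ k₂ k₃) W 0 ∧ coeff 0 W = 1 ∧ coeff 1 W = 0 ∧
      coeff 2 W = -(k₁ + 2 * k₃) / 2 ∧ coeff 3 W = 0 ∧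
      coeff 4 W = ((3 * k₁ + 4 * k₃) * (k₁ + 2 * k₃) - 6 * k₂) / 8 := by
  obtain ⟨W, hW⟩ := exists_hasTaylorSeriesAt (contDiffAt_lengthWeight k₁ k₂ k₃)
  have hX := hasTaylorSeriesAt_id_zero (𝕜 := ℝ)
  have hc := fun c : ℝ => hasTaylorSeriesAt_const c 0
  have hlhs := (((hc 1).add ((hc (k₁ + k₃)).mul (hX.pow 2))).add ((hc k₂).mul (hX.pow 4))).mul
    hW.deriv
  have hrhs := ((hc 0).sub (hX.mul ((hc (k₁ + 2 * k₃)).add ((hc (3 * k₂)).mul (hX.pow 2))))).mul hW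
  have heq := hlhs.unique hrhs <| (eventually_deriv_lengthWeight k₁ k₂ k₃).mono fun s hs => by
    simpa using hs
  have hW₀ : coeff 0 W = 1 := hW.coeff_zero.trans (lengthWeight_zero k₁ k₂ k₃)
  rw [map_one, map_zero, zero_sub] at heq
  have hcoeff := coeff_of_weight_equation heq
  rw [hW₀] at hcoeff
  exact ⟨W, hW, hW₀, by simpa only [mul_one] using hcoeff⟩

variable {k₁ k₂ k₃} in
lemma exists_hasTaylorSeriesAt_of_profile_equation {φ : ℝ → ℝ} (hφ : ContDiffAt ℝ ∞ φ 0)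
    (hode : ∀ᶠ s in 𝓝 0, (1 + (k₁ + k₃) * s ^ 2 + k₂ * s ^ 4) * deriv (deriv φ) s
      = (k₁ + k₂ * s ^ 2) * (φ s - s * deriv φ s)) :
    ∃ Φ, HasTaylorSeriesAt φ Φ 0 ∧ coeff 0 Φ = φ 0 ∧ coeff 2 Φ = k₁ / 2 * φ 0 ∧
      coeff 4 Φ = (2 * k₂ - 3 * k₁ ^ 2 - 2 * k₁ * k₃) / 24 * φ 0 := by
  obtain ⟨Φ, hΦ⟩ := exists_hasTaylorSeriesAt hφ
  have hX := hasTaylorSeriesAt_id_zero (𝕜 := ℝ)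
  have hc := fun c : ℝ => hasTaylorSeriesAt_const c 0
  have hlhs := (((hc 1).add ((hc (k₁ + k₃)).mul (hX.pow 2))).add ((hc k₂).mul (hX.pow 4))).mul
    hΦ.deriv.deriv
  have hrhs := ((hc k₁).add ((hc k₂).mul (hX.pow 2))).mul (hΦ.sub (hX.mul hΦ.deriv))
  have heq := hlhs.unique hrhs <| hode.mono fun s hs => by simpa using hs
  refine ⟨Φ, hΦ, hΦ.coeff_zero, ?_⟩
  rw [← hΦ.coeff_zero]
  exact coeff_of_profile_equation (by simpa only [map_one] using heq)

variable {k₁ k₂ k₃} in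
lemma exists_hasTaylorSeriesAt_mul_lengthWeight {φ : ℝ → ℝ} (hφ : ContDiffAt ℝ ∞ φ 0)
    (hode : ∀ᶠ s in 𝓝 0, (1 + (k₁ + k₃) * s ^ 2 + k₂ * s ^ 4) * deriv (deriv φ) s
      = (k₁ + k₂ * s ^ 2) * (φ s - s * deriv φ s)) :
    ∃ F, HasTaylorSeriesAt (φ * lengthWeight k₁ k₂ k₃) F 0 ∧ coeff 0 F = φ 0 ∧
      coeff 2 F = -k₃ * φ 0 ∧ coeff 4 F = (3 * k₃ ^ 2 + 2 * k₁ * k₃ - 2 * k₂) / 3 * φ 0 := by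
  obtain ⟨W, hW, hW₀, hW₁, hW₂, hW₃, hW₄⟩ := exists_hasTaylorSeriesAt_lengthWeight k₁ k₂ k₃
  obtain ⟨Φ, hΦ, hΦ₀, hΦ₂, hΦ₄⟩ := exists_hasTaylorSeriesAt_of_profile_equation hφ hode
  refine ⟨Φ * W, hΦ.mul hW, ?_, ?_, ?_⟩ <;>
    simp only [coeff_mul, Finset.Nat.antidiagonal_succ, Finset.Nat.antidiagonal_zero,
      Finset.sum_cons, Finset.map_cons, Finset.map_singleton, Finset.sum_singleton,
      Function.Embedding.prodMap, Function.Embedding.coeFn_mk, Prod.map_apply, Nat.succ_eq_add_one,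
      Nat.reduceAdd, Function.Embedding.refl_apply, zero_add,
      hW₀, hW₁, hW₂, hW₃, hW₄, hΦ₀, hΦ₂, hΦ₄] <;>
    ring

lemma Lone_eq_inv_sqrt_mul_integral (φ : ℝ → ℝ) {μ : ℝ} (hμ : 0 < μ) (δ : ℝ) :
    Lone k₁ k₂ k₃ μ φ δ = (√μ)⁻¹ * ∫ u in (0 : ℝ)..2 * Real.pi,
      (φ * lengthWeight k₁ k₂ k₃) (-2 * μ⁻¹ * δ * Real.sin u) := by
  have hB : ∀ t, Bfn μ δ t = (-2 * μ⁻¹ * δ * Real.sin (√μ * t)) ^ 2 := fun t => by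
    rw [Bfn]
    ring
  have hperiod : √μ * (2 * Real.pi / √μ) = 2 * Real.pi :=
    mul_div_cancel₀ _ (Real.sqrt_pos.2 hμ).ne'
  have hsubst := integral_comp_mul_left (a := 0) (b := 2 * Real.pi / √μ)
    (fun u => (φ * lengthWeight k₁ k₂ k₃) (-2 * μ⁻¹ * δ * Real.sin u)) (Real.sqrt_pos.2 hμ).ne'
  rw [mul_zero, hperiod, smul_eq_mul] at hsubst
  rw [← hsubst, Lone]
  simp only [Pi.mul_apply, lengthWeight, hB, ← pow_mul, Nat.reduceMul, div_eq_mul_inv]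

end LengthIntegrand

/-- as `δ → 0⁺`,
`L₁(δ) = 2π/√μ - (4k₃π/(μ²√μ))δ² + (4(3k₃²+2k₁k₃-2k₂)π/(μ⁴√μ))δ⁴ + O(δ⁶)`. -/
theorem stmt_10 (k₁ k₂ k₃ μ ε : ℝ) (hμ : 0 < μ) (hε : 0 < ε)
    (hf : ∀ θ : ℝ, 0 ≤ θ → θ < ε → 0 < 1 + (k₁ + k₃) * θ + k₂ * θ ^ 2)
    (φ : ℝ → ℝ) (εφ : ℝ) (hεφ : 0 < εφ)
    (hsmooth : ContDiffOn ℝ (⊤ : ℕ∞) φ (Ioo (-εφ) εφ))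
    (hφ0 : φ 0 = 1)
    (hode : ∀ s ∈ Ioo (-εφ) εφ,
      (1 + (k₁ + k₃) * s ^ 2 + k₂ * s ^ 4) * deriv (deriv φ) s
        = (k₁ + k₂ * s ^ 2) * (φ s - s * deriv φ s)) :
    (fun δ : ℝ => Lone k₁ k₂ k₃ μ φ δ -
        (2 * Real.pi / Real.sqrt μ
          - 4 * k₃ * Real.pi / (μ ^ 2 * Real.sqrt μ) * δ ^ 2
          + 4 * (3 * k₃ ^ 2 + 2 * k₁ * k₃ - 2 * k₂) * Real.pi / (μ ^ 4 * Real.sqrt μ) * δ ^ 4))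
      =O[𝓝[>] (0:ℝ)] (fun δ : ℝ => δ ^ 6) := by
  have hφ : ContDiffAt ℝ ∞ φ 0 := hsmooth.contDiffAt (Ioo_mem_nhds (by linarith) hεφ)
  obtain ⟨F, hF, hF₀, hF₂, hF₄⟩ := exists_hasTaylorSeriesAt_mul_lengthWeight hφ <|
    eventually_of_mem (Ioo_mem_nhds (by linarith) hεφ) hode
  have hscale : Tendsto (fun δ : ℝ => -2 * μ⁻¹ * δ) (𝓝[>] 0) (𝓝 0) :=
    tendsto_nhdsWithin_of_tendsto_nhds (Continuous.tendsto' (by fun_prop) 0 0 (by simp))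
  have hexpansion := ((hF.integral_comp_mul_sin_isBigO 3).comp_tendsto hscale).const_mul_left (√μ)⁻¹
  have hsix : (fun δ : ℝ => (-2 * μ⁻¹ * δ) ^ 6) =O[𝓝[>] 0] fun δ => δ ^ 6 := by
    simp only [mul_pow _ _ 6]
    exact (isBigO_refl _ _).const_mul_left _
  refine (hexpansion.trans hsix).congr_left fun δ => ?_
  rw [Lone_eq_inv_sqrt_mul_integral k₁ k₂ k₃ φ hμ, Function.comp_apply, mul_sub]
  congr 1
  simp only [Finset.sum_range_succ, Finset.sum_range_zero, Nat.centralBinom, Nat.choose,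
    Nat.reduceAdd, Nat.reduceMul, mul_zero, hF₀, hF₂, hF₄, hφ0]
  push_cast
  field_simp
  ring
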